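/- Let p ≥ 1 and μ, λ ∈ ℝᵖ. Define π_p(μ, λ) = Σ_{k=0}^{p} σ_k(μ + X·𝟙)·σ_{p-k}(λ + X·𝟙) / C(p,k) ∈ ℝ[X], where σ_j acts on p variables. Then π_p(μ, λ) = Σ_{l=0}^{p} ( Σ_{i=0}^{p-l} ( (p-i)!·(l+i)! ) / ( p!·l! ) · σ_{p-l-i}(μ)·σ_i(λ) ) · (2X)ˡ. -/

import Mathlib

open Polynomial

/-- The `k`-th elementary symmetric polynomial in `p` real variables. -/
noncomputable def esymm (p k : ℕ) (x : Fin p → ℝ) : ℝ :=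
  ∑ s ∈ Finset.powersetCard k (Finset.univ : Finset (Fin p)), ∏ i ∈ s, x i

/-- The univariate polynomial `σ_k(x₁ + X, …, x_p + X)`. -/
noncomputable def esymmPoly (p k : ℕ) (x : Fin p → ℝ) : Polynomial ℝ :=
  ∑ s ∈ Finset.powersetCard k (Finset.univ : Finset (Fin p)), ∏ i ∈ s, (X + C (x i))

/-! Write `F = ∏ᵢ (X + μᵢ)` and `G = ∏ᵢ (X + λᵢ)`. By Taylor's formula `σ_k(μ + X·𝟙)` is
`F⁽ᵖ⁻ᵏ⁾ / (p - k)!`, so `p! π_p(μ, λ) = ∑_{i + j = p} F⁽ⁱ⁾ G⁽ʲ⁾`. As `F` and `G` have degree `p`,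
the Leibniz rule shows that the derivative of `∑_{i + j = n} F⁽ⁱ⁾ G⁽ʲ⁾` is
`2 ∑_{i + j = n + 1} F⁽ⁱ⁾ G⁽ʲ⁾` for every `n ≥ p`. Taking `l` derivatives and evaluating at `0`
yields `l!` times the coefficient of `Xˡ` in `p! π_p(μ, λ)`, together with its factor `2ˡ`. -/

section CommSemiring

open Finset Nat

variable {R : Type*} [CommSemiring R]

theorem esymm_map_add_left_eq_eval_hasseDeriv (s : Multiset R) (r : R) {k : ℕ}
    (hk : k ≤ s.card) :
    (s.map (r + ·)).esymm (s.card - k) =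
      (hasseDeriv k (s.map fun a ↦ X + C a).prod).eval r := by
  have taylor_prod : taylor r (s.map fun a ↦ X + C a).prod =
      ((s.map (r + ·)).map fun a ↦ X + C a).prod := by
    rw [← taylorAlgHom_apply, map_multiset_prod, Multiset.map_map, Multiset.map_map]
    simp [add_assoc]
  rw [← taylor_coeff, taylor_prod, Multiset.prod_X_add_C_coeff _ (by simpa using hk),
    Multiset.card_map]

theorem factorial_mul_esymm_map_X_add_C (s : Multiset R) {k : ℕ} (hk : k ≤ s.card) :
    (k ! : R[X]) * (s.map fun a ↦ X + C a).esymm (s.card - k) =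
      derivative^[k] (s.map fun a ↦ X + C a).prod := by
  have map_prod : ((s.map C).map fun a ↦ X + C a).prod = ((s.map fun a ↦ X + C a).prod).map C := by
    simp [Polynomial.map_multiset_prod]
  have taylor_at_X := esymm_map_add_left_eq_eval_hasseDeriv (s.map (C : R → R[X])) X
    (by simpa using hk)
  rw [Multiset.card_map, Multiset.map_map, map_prod] at taylor_at_X
  calc (k ! : R[X]) * (s.map fun a ↦ X + C a).esymm (s.card - k)
      = ((k ! • hasseDeriv k) (((s.map fun a ↦ X + C a).prod).map (C : R →+* R[X]))).eval X := by
        simp [← taylor_at_X]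
    _ = derivative^[k] (s.map fun a ↦ X + C a).prod := by
        rw [factorial_smul_hasseDeriv, iterate_derivative_map, eval_map, eval₂_C_X]

theorem natDegree_prod_map_X_add_C_le (s : Multiset R) :
    (s.map fun a ↦ X + C a).prod.natDegree ≤ s.card := by
  refine (natDegree_multiset_prod_le _).trans ?_
  simpa using Nat.mul_le_mul_left s.card (natDegree_X_le (R := R))

/-- The sum `∑_{i + j = n} f⁽ⁱ⁾ g⁽ʲ⁾` of products of iterated derivatives. For
`f = ∏ᵢ (X + μᵢ)`, `g = ∏ᵢ (X + λᵢ)` of degree `n = p` it is `p! π_p(μ, λ)`. -/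
noncomputable def derivConv (n : ℕ) (f g : R[X]) : R[X] :=
  ∑ ij ∈ antidiagonal n, derivative^[ij.1] f * derivative^[ij.2] g

theorem derivative_derivConv {n : ℕ} {f g : R[X]} (hf : f.natDegree ≤ n) (hg : g.natDegree ≤ n) :
    derivative (derivConv n f g) = 2 * derivConv (n + 1) f g := by
  have shift_left : derivConv (n + 1) f g =
      ∑ ij ∈ antidiagonal n, derivative^[ij.1 + 1] f * derivative^[ij.2] g := by
    rw [derivConv, Nat.sum_antidiagonal_succ, iterate_derivative_eq_zero (Nat.lt_succ_of_le hg),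
      mul_zero, zero_add]
  have shift_right : derivConv (n + 1) f g =
      ∑ ij ∈ antidiagonal n, derivative^[ij.1] f * derivative^[ij.2 + 1] g := by
    rw [derivConv, Nat.sum_antidiagonal_succ', iterate_derivative_eq_zero (Nat.lt_succ_of_le hf),
      zero_mul, zero_add]
  rw [two_mul]
  nth_rw 1 [shift_left]
  rw [shift_right, ← sum_add_distrib, derivConv, derivative_sum]
  simp only [derivative_mul, Function.iterate_succ_apply']

theorem iterate_derivative_derivConv {n : ℕ} {f g : R[X]} (hf : f.natDegree ≤ n)
    (hg : g.natDegree ≤ n) (l : ℕ) :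
    derivative^[l] (derivConv n f g) = 2 ^ l * derivConv (n + l) f g := by
  induction l with
  | zero => simp
  | succ l ih =>
    have derivative_two_pow : derivative (2 ^ l : R[X]) = 0 := by
      exact_mod_cast derivative_natCast (R := R) (n := 2 ^ l)
    rw [Function.iterate_succ_apply', ih, derivative_mul, derivative_two_pow, zero_mul, zero_add,
      derivative_derivConv (by lia) (by lia), pow_succ, mul_assoc, ← add_assoc]

theorem coeff_zero_iterate_derivative (f : R[X]) (k : ℕ) :
    (derivative^[k] f).coeff 0 = k ! * f.coeff k := by
  rw [coeff_iterate_derivative, zero_add, descFactorial_self, nsmul_eq_mul]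

-- For `p < l` both sides vanish, since `p + 1 - l` truncates to `0`.
theorem coeff_zero_derivConv_add {p : ℕ} {f g : R[X]} (hf : f.natDegree ≤ p)
    (hg : g.natDegree ≤ p) (l : ℕ) :
    (derivConv (p + l) f g).coeff 0 =
      ∑ i ∈ range (p + 1 - l), ((p - i)! * (l + i)! : R) * f.coeff (l + i) * g.coeff (p - i) := by
  have coeff_eq_zero {h : R[X]} (hh : h.natDegree ≤ p) {k : ℕ} (hk : p < k) : h.coeff k = 0 :=
    coeff_eq_zero_of_natDegree_lt (hh.trans_lt hk)
  have antidiagonal_sum : (derivConv (p + l) f g).coeff 0 =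
      ∑ i ∈ range (l + (p + 1)),
        (i ! : R) * f.coeff i * ((p + l - i)! * g.coeff (p + l - i)) := by
    simp only [derivConv, finsetSum_coeff, mul_coeff_zero, coeff_zero_iterate_derivative]
    rw [Nat.sum_antidiagonal_eq_sum_range_succ fun i j ↦
      (i ! : R) * f.coeff i * (j ! * g.coeff j), ← add_assoc, add_comm l p]
  have low_eq_zero : ∑ i ∈ range l,
      (i ! : R) * f.coeff i * ((p + l - i)! * g.coeff (p + l - i)) = 0 :=
    sum_eq_zero fun i hi ↦ by
      rw [coeff_eq_zero hg (by grind), mul_zero, mul_zero]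
  rw [antidiagonal_sum, sum_range_add, low_eq_zero, zero_add]
  symm
  refine sum_subset_zero_on_sdiff (range_subset_range.2 (Nat.sub_le _ _)) (fun i hi ↦ ?_)
    fun i _ ↦ ?_
  · rw [coeff_eq_zero hf (by grind), mul_zero, zero_mul]
  · rw [show p + l - (l + i) = p - i by lia]
    ring

theorem factorial_mul_coeff_derivConv {p : ℕ} {f g : R[X]} (hf : f.natDegree ≤ p)
    (hg : g.natDegree ≤ p) (l : ℕ) :
    (l ! : R) * (derivConv p f g).coeff l =
      2 ^ l * ∑ i ∈ range (p + 1 - l),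
        ((p - i)! * (l + i)! : R) * f.coeff (l + i) * g.coeff (p - i) := by
  rw [← coeff_zero_iterate_derivative, iterate_derivative_derivConv hf hg, mul_coeff_zero,
    coeff_zero_derivConv_add hf hg]
  simp [coeff_zero_eq_eval_zero]

end CommSemiring

section CharZero

open Finset Nat

variable {K : Type*} [Semifield K] [CharZero K]

theorem sum_inv_choose_mul_esymm_map_X_add_C {p : ℕ} {s t : Multiset K} (hs : s.card = p)
    (ht : t.card = p) :
    ∑ k ∈ range (p + 1), C ((p.choose k : K))⁻¹ *
        ((s.map fun a ↦ X + C a).esymm k * (t.map fun a ↦ X + C a).esymm (p - k)) =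
      C ((p ! : K))⁻¹ *
        derivConv p (s.map fun a ↦ X + C a).prod (t.map fun a ↦ X + C a).prod := by
  rw [derivConv, ← Nat.sum_antidiagonal_swap, Nat.sum_antidiagonal_eq_sum_range_succ_mk, mul_sum]
  refine sum_congr rfl fun k hk ↦ ?_
  have hkp : k ≤ p := mem_range_succ_iff.1 hk
  have inv_choose : ((p.choose k : K))⁻¹ = (p ! : K)⁻¹ * ((p - k)! * k !) := by
    rw [Nat.cast_choose K hkp, inv_div, mul_comm (k ! : K), div_eq_inv_mul]
  have deriv_s := factorial_mul_esymm_map_X_add_C s (k := p - k) (by lia)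
  have deriv_t := factorial_mul_esymm_map_X_add_C t (k := k) (by lia)
  rw [hs, Nat.sub_sub_self hkp] at deriv_s
  rw [ht] at deriv_t
  simp only [Prod.fst_swap, Prod.snd_swap, ← deriv_s, ← deriv_t, inv_choose, C_mul, map_natCast]
  ring

theorem coeff_derivConv_prod_X_add_C {p : ℕ} {s t : Multiset K} (hs : s.card = p)
    (ht : t.card = p) (l : ℕ) :
    (derivConv p (s.map fun a ↦ X + C a).prod (t.map fun a ↦ X + C a).prod).coeff l =
      2 ^ l * ∑ i ∈ range (p + 1 - l),
        ((p - i)! * (l + i)! : K) / l ! * s.esymm (p - l - i) * t.esymm i := by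
  have hl : (l ! : K) ≠ 0 := Nat.cast_ne_zero.2 (factorial_ne_zero l)
  rw [← mul_right_inj' hl, factorial_mul_coeff_derivConv
    (hs ▸ natDegree_prod_map_X_add_C_le s) (ht ▸ natDegree_prod_map_X_add_C_le t),
    mul_left_comm, mul_sum (a := (l ! : K))]
  congr 1
  refine sum_congr rfl fun i hi ↦ ?_
  have hli : l + i ≤ p := by grind
  rw [Multiset.prod_X_add_C_coeff s (by lia), Multiset.prod_X_add_C_coeff t (by lia), hs, ht,
    Nat.sub_sub_self (by lia), ← Nat.sub_sub]
  field_simp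

theorem stmt17_general {p : ℕ} {s t : Multiset K} (hs : s.card = p) (ht : t.card = p) :
    ∑ k ∈ range (p + 1), C ((p.choose k : K))⁻¹ *
        ((s.map fun a ↦ X + C a).esymm k * (t.map fun a ↦ X + C a).esymm (p - k)) =
      ∑ l ∈ range (p + 1),
        C (∑ i ∈ range (p - l + 1),
            ((p - i)! * (l + i)! : K) / (p ! * l !) * s.esymm (p - l - i) * t.esymm i) *
          (C 2 * X) ^ l := by
  rw [sum_inv_choose_mul_esymm_map_X_add_C hs ht]
  ext l
  have coeff_rhs (c : ℕ → K) : (∑ l ∈ range (p + 1), C (c l) * (C 2 * X) ^ l).coeff l =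
      if l ≤ p then c l * 2 ^ l else 0 := by
    simp only [finsetSum_coeff, mul_pow, ← C_pow, coeff_C_mul, coeff_X_pow]
    simp
  rw [coeff_C_mul, coeff_derivConv_prod_X_add_C hs ht, coeff_rhs]
  split_ifs with hl
  · rw [Nat.sub_add_comm hl, mul_left_comm, mul_comm, mul_sum]
    congr 1
    refine sum_congr rfl fun i _ ↦ ?_
    field_simp
  · rw [Nat.sub_eq_zero_of_le (by lia)]
    simp

end CharZero

theorem esymm_eq_multiset_esymm (p k : ℕ) (x : Fin p → ℝ) :
    esymm p k x = (Finset.univ.val.map x).esymm k :=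
  (Finset.esymm_map_val x Finset.univ k).symm

theorem esymmPoly_eq_multiset_esymm (p k : ℕ) (x : Fin p → ℝ) :
    esymmPoly p k x = ((Finset.univ.val.map x).map fun a ↦ X + C a).esymm k := by
  rw [Multiset.map_map]
  exact (Finset.esymm_map_val (fun i ↦ X + C (x i)) Finset.univ k).symm

theorem stmt17 (p : ℕ) (hp : 1 ≤ p) (μ lam : Fin p → ℝ) :
    ∑ k ∈ Finset.range (p + 1),
        C ((p.choose k : ℝ))⁻¹ * (esymmPoly p k μ * esymmPoly p (p - k) lam)
      = ∑ l ∈ Finset.range (p + 1),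
          C (∑ i ∈ Finset.range (p - l + 1),
              (((p - i).factorial : ℝ) * ((l + i).factorial : ℝ))
                / ((p.factorial : ℝ) * (l.factorial : ℝ))
              * esymm p (p - l - i) μ * esymm p i lam)
            * (C (2 : ℝ) * X) ^ l := by
  simp only [esymmPoly_eq_multiset_esymm, esymm_eq_multiset_esymm]
  exact stmt17_general (by simp) (by simp)
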